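/- arXiv:2408.08445 — 2 statements merged into one kernel-verified Lean document; each statement's English description precedes it below -/
import Mathlib

section
/- Fix m ∈ ℕ and let (X₁,…,X_m) and (Y₁,…,Y_m) be random vectors taking values in ℤ_{≥0}^m (possibly defined on different probability spaces). Suppose there exist a > 0 and a sequence c_n ∈ [0,∞) with ∑_{n=1}^∞ (c_n/n!)·aⁿ < ∞, such that for all n₁,…,n_m ∈ ℤ_{≥0} with n₁+⋯+n_m = n, E[∏_{i=1}^m X_i!/(X_i−n_i)!] = E[∏_{i=1}^m Y_i!/(Y_i−n_i)!] ≤ c_n. Then (X₁,…,X_m) and (Y₁,…,Y_m) have the same distribution. -/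
open MeasureTheory
open scoped ENNReal

/-!
By the binomial theorem `(1 + z) ^ x = ∑ n, z ^ n / n! * x.descFactorial n`, so at the points
`1 + z` with `z ≥ 0` small the factorial moments give the generating function
`u ↦ E ∏ i, u i ^ X i`, which the growth condition makes finite there. Along a ray `t ↦ t • u`
this function is a power series in `t` whose `k`-th coefficient is the homogeneous polynomial
`∑ x with |x| = k, P (X = x) * u ^ x`. By the identity theorem these polynomials are determined
for all `u` in a box, hence so are their coefficients.
-/

open Filter Topology Finset
open scoped NNReal Nat

section PowerSeries

theorem formalMultilinearSeries_eq_of_sum_frequently_eq {𝕜 E : Type*} [RCLike 𝕜]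
    [NormedAddCommGroup E] [NormedSpace 𝕜 E] [CompleteSpace E]
    {p q : FormalMultilinearSeries 𝕜 𝕜 E} {r : ℝ≥0∞} (hp : r ≤ p.radius) (hq : r ≤ q.radius)
    {z : 𝕜} (hz : z ∈ Metric.eball 0 r) (h : ∃ᶠ w in 𝓝[≠] z, p.sum w = q.sum w) : p = q := by
  have hr : 0 < r := zero_le.trans_lt (Metric.mem_eball.1 hz)
  have hpr := (p.hasFPowerSeriesOnBall (hr.trans_le hp)).mono hr hp
  have hqr := (q.hasFPowerSeriesOnBall (hr.trans_le hq)).mono hr hq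
  have hEq : Set.EqOn p.sum q.sum (Metric.eball 0 r) :=
    hpr.analyticOnNhd.eqOn_of_preconnected_of_frequently_eq hqr.analyticOnNhd
      Metric.isPreconnected_eball hz h
  exact hpr.hasFPowerSeriesAt.eq_formalMultilinearSeries_of_eventually hqr.hasFPowerSeriesAt
    (hEq.eventuallyEq_of_mem (Metric.eball_mem_nhds 0 hr))

theorem ne_top_of_tsum_mul_pow_ne_top {a : ℕ → ℝ≥0∞} {r : ℝ≥0} (hr : 0 < r)
    (h : ∑' k, a k * r ^ k ≠ ∞) (k : ℕ) : a k ≠ ∞ := fun hk =>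
  ENNReal.ne_top_of_tsum_ne_top h k <| by
    rw [hk, ENNReal.top_mul (pow_ne_zero k (ENNReal.coe_ne_zero.2 hr.ne'))]

theorem le_radius_ofScalars_toReal {a : ℕ → ℝ≥0∞} {r : ℝ≥0} (h : ∑' k, a k * r ^ k ≠ ∞) :
    (r : ℝ≥0∞) ≤ (FormalMultilinearSeries.ofScalars ℝ fun k => (a k).toReal).radius := by
  refine FormalMultilinearSeries.le_radius_of_summable _ ?_
  simpa [FormalMultilinearSeries.ofScalars_norm] using ENNReal.summable_toReal h

theorem ofScalars_toReal_sum {a : ℕ → ℝ≥0∞} (ha : ∀ k, a k ≠ ∞) (t : ℝ≥0) :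
    (FormalMultilinearSeries.ofScalars ℝ fun k => (a k).toReal).sum (t : ℝ) =
      (∑' k, a k * t ^ k).toReal := by
  rw [ENNReal.tsum_toReal_eq fun k => ENNReal.mul_ne_top (ha k) (by finiteness)]
  simpa [FormalMultilinearSeries.ofScalarsSum] using
    FormalMultilinearSeries.ofScalars_sum_eq (fun k => (a k).toReal) (t : ℝ)

theorem eq_of_tsum_mul_pow_eqOn_Ioo {a b : ℕ → ℝ≥0∞} {s r : ℝ≥0} (hsr : s < r)
    (ha : ∑' k, a k * r ^ k ≠ ∞) (hb : ∑' k, b k * r ^ k ≠ ∞)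
    (h : ∀ t ∈ Set.Ioo s r, ∑' k, a k * t ^ k = ∑' k, b k * t ^ k) : a = b := by
  have ha' := ne_top_of_tsum_mul_pow_ne_top (pos_of_gt hsr) ha
  have hb' := ne_top_of_tsum_mul_pow_ne_top (pos_of_gt hsr) hb
  have hs : (s : ℝ) ∈ Metric.eball 0 (r : ℝ≥0∞) := by simpa using hsr
  have hfreq : ∃ᶠ t : ℝ in 𝓝[≠] (s : ℝ),
      (FormalMultilinearSeries.ofScalars ℝ fun k => (a k).toReal).sum t =
        (FormalMultilinearSeries.ofScalars ℝ fun k => (b k).toReal).sum t := by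
    refine Frequently.filter_mono (Eventually.frequently ?_) (nhdsGT_le_nhdsNE (s : ℝ))
    filter_upwards [Ioo_mem_nhdsGT (NNReal.coe_lt_coe.2 hsr)] with t ht
    lift t to ℝ≥0 using s.coe_nonneg.trans ht.1.le
    rw [ofScalars_toReal_sum ha', ofScalars_toReal_sum hb', h t (by simpa using ht)]
  have hseries := formalMultilinearSeries_eq_of_sum_frequently_eq
    (le_radius_ofScalars_toReal ha) (le_radius_ofScalars_toReal hb) hs hfreq
  funext k
  exact (ENNReal.toReal_eq_toReal_iff' (ha' k) (hb' k)).1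
    (congrFun (FormalMultilinearSeries.ofScalars_series_injective ℝ ℝ hseries) k)

end PowerSeries

theorem exists_lt_one_forall_le_mul {ι : Type*} [Finite ι] {p u : ι → ℝ≥0}
    (hpu : ∀ i, p i < u i) : ∃ s < 1, ∀ i, p i ≤ s * u i := by
  have := Fintype.ofFinite ι
  refine ⟨univ.sup fun i => p i / u i, (Finset.sup_lt_iff one_pos).2 fun i _ => ?_, fun i => ?_⟩
  · exact (div_lt_one (pos_of_gt (hpu i))).2 (hpu i)
  · exact (div_le_iff₀ (pos_of_gt (hpu i))).1 (le_sup (f := fun i => p i / u i) (mem_univ i))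

theorem eq_of_sum_mul_prod_pow_eqOn_pi {ι R : Type*} [Fintype ι] [CommRing R] [IsDomain R]
    {s : Finset (ι → ℕ)} {a b : (ι → ℕ) → R} {S : ι → Set R} (hS : ∀ i, (S i).Infinite)
    (h : ∀ u ∈ Set.pi Set.univ S,
      ∑ x ∈ s, a x * ∏ i, u i ^ x i = ∑ x ∈ s, b x * ∏ i, u i ^ x i) :
    ∀ x ∈ s, a x = b x := by
  classical
  let toPoly (c : (ι → ℕ) → R) : MvPolynomial ι R :=
    ∑ x ∈ s, MvPolynomial.monomial (Finsupp.equivFunOnFinite.symm x) (c x)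
  have eval_toPoly (c) (u : ι → R) :
      MvPolynomial.eval u (toPoly c) = ∑ x ∈ s, c x * ∏ i, u i ^ x i := by
    simp [toPoly, MvPolynomial.eval_monomial, Finsupp.prod_fintype]
  have coeff_toPoly (c) {x : ι → ℕ} (hx : x ∈ s) :
      (toPoly c).coeff (Finsupp.equivFunOnFinite.symm x) = c x := by
    simp [toPoly, MvPolynomial.coeff_sum, MvPolynomial.coeff_monomial, hx]
  have hpoly : toPoly a = toPoly b := MvPolynomial.funext_set S hS fun u hu => by
    rw [eval_toPoly, eval_toPoly, h u hu]
  intro x hx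
  rw [← coeff_toPoly a hx, hpoly, coeff_toPoly b hx]

section SumByDegree

variable {ι : Type*} [Fintype ι] [DecidableEq ι]

theorem tsum_eq_tsum_sum_piAntidiag (f : (ι → ℕ) → ℝ≥0∞) :
    ∑' n, f n = ∑' k, ∑ n ∈ piAntidiag univ k, f n := by
  rw [← ENNReal.tsum_fiberwise f fun n => ∑ i, n i]
  refine tsum_congr fun k => ?_
  have hfiber : (fun n : ι → ℕ => ∑ i, n i) ⁻¹' {k} = (piAntidiag univ k : Finset (ι → ℕ)) := by
    ext n
    simp
  rw [hfiber, Finset.tsum_subtype' (piAntidiag univ k) f]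

theorem sum_piAntidiag_prod_pow_div_factorial (z : ι → ℝ≥0∞) (k : ℕ) :
    ∑ n ∈ piAntidiag univ k, ∏ i, z i ^ n i / (n i)! = (∑ i, z i) ^ k / k ! := by
  rw [sum_pow_eq_sum_piAntidiag, div_eq_mul_inv, sum_mul]
  refine sum_congr rfl fun n hn => ?_
  have hfact (i : ι) : ((n i)! : ℝ≥0∞) ≠ 0 := Nat.cast_ne_zero.2 (n i).factorial_ne_zero
  have hmul : (Nat.multinomial univ n : ℝ≥0∞) ≠ 0 :=
    Nat.cast_ne_zero.2 (Nat.multinomial_pos _ _).ne'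
  have hspec : (k ! : ℝ≥0∞) = Nat.multinomial univ n * ∏ i, ((n i)! : ℝ≥0∞) := by
    rw [← (mem_piAntidiag.1 hn).1, ← Nat.multinomial_spec univ n]
    push_cast
    exact mul_comm _ _
  rw [ENNReal.prod_div_distrib_of_ne_zero fun i _ => hfact i, ← div_eq_mul_inv, hspec,
    ENNReal.mul_div_mul_left _ _ hmul (ENNReal.natCast_ne_top _)]

end SumByDegree

section GeneratingFunction

variable {ι : Type*} [Fintype ι]

/-- The generating function `u ↦ E ∏ i, u i ^ X i` of a random vector `X` with law `μ`, with values
in `[0, ∞]` so that no integrability has to be assumed. -/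
noncomputable def probGenFun (μ : Measure (ι → ℕ)) (u : ι → ℝ≥0) : ℝ≥0∞ :=
  ∫⁻ x, ∏ i, (u i : ℝ≥0∞) ^ x i ∂μ

/-- The joint factorial moment `E ∏ i, X i ! / (X i - n i)!` of a random vector `X` with law `μ`,
with values in `[0, ∞]`. -/
noncomputable def factorialMoment (μ : Measure (ι → ℕ)) (n : ι → ℕ) : ℝ≥0∞ :=
  ∫⁻ x, ∏ i, ((x i).descFactorial (n i) : ℝ≥0∞) ∂μ

theorem probGenFun_mono (μ : Measure (ι → ℕ)) : Monotone (probGenFun μ) := fun u v huv => by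
  unfold probGenFun
  gcongr with x i
  exact huv i

theorem probGenFun_eq_tsum (μ : Measure (ι → ℕ)) (u : ι → ℝ≥0) :
    probGenFun μ u = ∑' x, μ {x} * ∏ i, (u i : ℝ≥0∞) ^ x i := by
  simp_rw [probGenFun, lintegral_countable', mul_comm]

theorem measure_singleton_ne_top_of_probGenFun_ne_top {μ : Measure (ι → ℕ)} {u : ι → ℝ≥0}
    (hu : ∀ i, 0 < u i) (h : probGenFun μ u ≠ ∞) (x : ι → ℕ) : μ {x} ≠ ∞ := by
  rw [probGenFun_eq_tsum] at h
  intro hx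
  refine ENNReal.ne_top_of_tsum_ne_top h x ?_
  rw [hx, ENNReal.top_mul]
  exact prod_ne_zero_iff.2 fun i _ => pow_ne_zero _ (ENNReal.coe_ne_zero.2 (hu i).ne')

/-- The part of degree `k` of the power series `probGenFun μ`: a homogeneous polynomial whose
coefficients are the point masses of `μ`. -/
noncomputable def probGenFunPart [DecidableEq ι] (μ : Measure (ι → ℕ)) (u : ι → ℝ≥0) (k : ℕ) :
    ℝ≥0∞ :=
  ∑ x ∈ piAntidiag univ k, μ {x} * ∏ i, (u i : ℝ≥0∞) ^ x i

theorem toReal_probGenFunPart [DecidableEq ι] {μ : Measure (ι → ℕ)} (hμ : ∀ x, μ {x} ≠ ∞)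
    (u : ι → ℝ≥0) (k : ℕ) :
    (probGenFunPart μ u k).toReal =
      ∑ x ∈ piAntidiag univ k, μ.real {x} * ∏ i, (u i : ℝ) ^ x i := by
  have hprod (x : ι → ℕ) : ∏ i, (u i : ℝ≥0∞) ^ x i ≠ ∞ :=
    ENNReal.prod_ne_top fun i _ => by finiteness
  rw [probGenFunPart, ENNReal.toReal_sum fun x _ => ENNReal.mul_ne_top (hμ x) (hprod x)]
  simp [ENNReal.toReal_prod, Measure.real]

theorem probGenFun_smul [DecidableEq ι] (μ : Measure (ι → ℕ)) (t : ℝ≥0) (u : ι → ℝ≥0) :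
    probGenFun μ (t • u) = ∑' k, probGenFunPart μ u k * t ^ k := by
  rw [probGenFun_eq_tsum, tsum_eq_tsum_sum_piAntidiag]
  refine tsum_congr fun k => ?_
  rw [probGenFunPart, sum_mul]
  refine sum_congr rfl fun x hx => ?_
  rw [← (mem_piAntidiag.1 hx).1, ← prod_pow_eq_pow_sum, mul_assoc, ← prod_mul_distrib]
  simp [mul_pow, mul_comm]

theorem probGenFunPart_eq_of_probGenFun_eqOn_Icc [DecidableEq ι] {μ ν : Measure (ι → ℕ)}
    {p u : ι → ℝ≥0} (hpu : ∀ i, p i < u i) (hfin : probGenFun μ u ≠ ∞)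
    (h : Set.EqOn (probGenFun μ) (probGenFun ν) (Set.Icc p u)) :
    probGenFunPart μ u = probGenFunPart ν u := by
  have hu : u ∈ Set.Icc p u := ⟨fun i => (hpu i).le, le_rfl⟩
  obtain ⟨s, hs, hps⟩ := exists_lt_one_forall_le_mul hpu
  refine eq_of_tsum_mul_pow_eqOn_Ioo hs ?_ ?_ fun t ht => ?_
  · rwa [← probGenFun_smul, one_smul]
  · rwa [← probGenFun_smul, one_smul, ← h hu]
  · have htu : t • u ∈ Set.Icc p u :=
      ⟨fun i => (hps i).trans (mul_le_mul_left ht.1.le _), fun i => mul_le_of_le_one_left' ht.2.le⟩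
    rw [← probGenFun_smul, ← probGenFun_smul, h htu]

theorem measure_ext_of_probGenFun_eqOn_Icc {μ ν : Measure (ι → ℕ)} {p v : ι → ℝ≥0}
    (hpv : ∀ i, p i < v i) (hfin : probGenFun μ v ≠ ∞)
    (h : Set.EqOn (probGenFun μ) (probGenFun ν) (Set.Icc p v)) : μ = ν := by
  classical
  have hv : v ∈ Set.Icc p v := ⟨fun i => (hpv i).le, le_rfl⟩
  have hv0 (i : ι) : 0 < v i := pos_of_gt (hpv i)
  have hμ := measure_singleton_ne_top_of_probGenFun_ne_top hv0 hfin
  have hν := measure_singleton_ne_top_of_probGenFun_ne_top hv0 (h hv ▸ hfin)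
  have hpoly (k : ℕ) (u : ι → ℝ) (hu : u ∈ Set.pi Set.univ fun i => Set.Ioo (p i : ℝ) (v i)) :
      ∑ x ∈ piAntidiag univ k, μ.real {x} * ∏ i, u i ^ x i =
        ∑ x ∈ piAntidiag univ k, ν.real {x} * ∏ i, u i ^ x i := by
    lift u to ι → ℝ≥0 using fun i => (p i).coe_nonneg.trans (hu i trivial).1.le
    have huv : u ≤ v := fun i => (NNReal.coe_lt_coe.1 (hu i trivial).2).le
    have hpart := congrFun (probGenFunPart_eq_of_probGenFun_eqOn_Icc
      (fun i => NNReal.coe_lt_coe.1 (hu i trivial).1)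
      (ne_top_of_le_ne_top hfin (probGenFun_mono μ huv)) (h.mono (Set.Icc_subset_Icc_right huv))) k
    simpa [toReal_probGenFunPart hμ, toReal_probGenFunPart hν] using congrArg ENNReal.toReal hpart
  refine Measure.ext_of_singleton fun x => ?_
  refine (measureReal_eq_measureReal_iff (hμ x) (hν x)).1 ?_
  exact eq_of_sum_mul_prod_pow_eqOn_pi
    (fun i => Set.Ioo_infinite (NNReal.coe_lt_coe.2 (hpv i))) (hpoly (∑ i, x i)) x (by simp)

theorem one_add_pow_eq_sum_descFactorial (z : ℝ≥0∞) (x : ℕ) :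
    (1 + z) ^ x = ∑ n ∈ range (x + 1), z ^ n / n ! * x.descFactorial n := by
  rw [add_comm, add_pow]
  refine sum_congr rfl fun n _ => ?_
  have hn : (n ! : ℝ≥0∞) ≠ 0 := Nat.cast_ne_zero.2 n.factorial_ne_zero
  rw [one_pow, mul_one, Nat.descFactorial_eq_factorial_mul_choose, Nat.cast_mul, ← mul_assoc,
    ENNReal.div_mul_cancel hn (ENNReal.natCast_ne_top _)]

theorem prod_one_add_pow_eq_tsum_descFactorial (z : ι → ℝ≥0∞) (x : ι → ℕ) :
    ∏ i, (1 + z i) ^ x i =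
      ∑' n : ι → ℕ, (∏ i, z i ^ n i / (n i)!) * ∏ i, ((x i).descFactorial (n i) : ℝ≥0∞) := by
  classical
  simp_rw [one_add_pow_eq_sum_descFactorial, ← prod_mul_distrib]
  rw [prod_univ_sum, tsum_eq_sum (s := Fintype.piFinset fun i => range (x i + 1))]
  intro n hn
  obtain ⟨i, hi⟩ : ∃ i, x i < n i := by simpa [Nat.lt_succ_iff] using hn
  exact prod_eq_zero (mem_univ i) (by simp [Nat.descFactorial_of_lt hi])

theorem probGenFun_one_add (μ : Measure (ι → ℕ)) (z : ι → ℝ≥0) :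
    probGenFun μ (1 + z) =
      ∑' n : ι → ℕ, (∏ i, (z i : ℝ≥0∞) ^ n i / (n i)!) * factorialMoment μ n := by
  have hmeas {f : (ι → ℕ) → ℝ≥0∞} : Measurable f := measurable_of_countable f
  simp only [probGenFun, factorialMoment, Pi.add_apply, Pi.one_apply, ENNReal.coe_add,
    ENNReal.coe_one, prod_one_add_pow_eq_tsum_descFactorial]
  rw [lintegral_tsum fun n => hmeas.aemeasurable]
  simp_rw [lintegral_const_mul _ hmeas]

theorem probGenFun_one_add_le {μ : Measure (ι → ℕ)} {C : ℕ → ℝ≥0∞}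
    (hC : ∀ n, factorialMoment μ n ≤ C (∑ i, n i)) (z : ι → ℝ≥0) :
    probGenFun μ (1 + z) ≤ ∑' k, C k / k ! * (∑ i, (z i : ℝ≥0∞)) ^ k := by
  classical
  calc probGenFun μ (1 + z)
      ≤ ∑' n : ι → ℕ, (∏ i, (z i : ℝ≥0∞) ^ n i / (n i)!) * C (∑ i, n i) := by
        rw [probGenFun_one_add]
        gcongr with n
        exact hC n
    _ = ∑' k, (∑ n ∈ piAntidiag univ k, ∏ i, (z i : ℝ≥0∞) ^ n i / (n i)!) * C k := by
        rw [tsum_eq_tsum_sum_piAntidiag]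
        refine tsum_congr fun k => ?_
        rw [sum_mul]
        exact sum_congr rfl fun n hn => by rw [(mem_piAntidiag.1 hn).1]
    _ = ∑' k, C k / k ! * (∑ i, (z i : ℝ≥0∞)) ^ k := by
        simp_rw [sum_piAntidiag_prod_pow_div_factorial, ENNReal.div_eq_inv_mul]
        exact tsum_congr fun k => by ring

theorem measure_ext_of_factorialMoment_eq {μ ν : Measure (ι → ℕ)} {C : ℕ → ℝ≥0∞} {r : ℝ≥0}
    (hr : 0 < r) (hsum : ∑' k, C k / k ! * (r : ℝ≥0∞) ^ k ≠ ∞)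
    (hC : ∀ n, factorialMoment μ n ≤ C (∑ i, n i))
    (h : factorialMoment μ = factorialMoment ν) : μ = ν := by
  let z : ι → ℝ≥0 := fun _ => r / (Fintype.card ι + 1)
  have hz : ∑ i, (z i : ℝ≥0∞) ≤ r := by
    have hcard : (Fintype.card ι : ℝ≥0) * (r / (Fintype.card ι + 1)) ≤ r := by
      rw [mul_div_left_comm]
      exact mul_le_of_le_one_right' (div_le_one_of_le₀ (by simp) (by positivity))
    simpa [z, nsmul_eq_mul] using ENNReal.coe_le_coe.2 hcard
  have hfin : probGenFun μ (1 + z) ≠ ∞ :=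
    ne_top_of_le_ne_top hsum <| (probGenFun_one_add_le hC z).trans <| by gcongr
  refine measure_ext_of_probGenFun_eqOn_Icc (p := 1) (v := 1 + z) (fun i => ?_) hfin fun u hu => ?_
  · exact lt_add_of_pos_right _ (div_pos hr (by positivity))
  · rw [← add_tsub_cancel_of_le hu.1, probGenFun_one_add, probGenFun_one_add, h]

end GeneratingFunction

theorem factorialMoment_map {ι Ω : Type*} [Fintype ι] [MeasurableSpace Ω] {P : Measure Ω}
    {X : Ω → ι → ℕ} (hX : AEMeasurable X P) (n : ι → ℕ) :
    factorialMoment (P.map X) n = ∫⁻ ω, ∏ i, ((X ω i).descFactorial (n i) : ℝ≥0∞) ∂P :=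
  lintegral_map' (measurable_of_countable _).aemeasurable hX

theorem tsum_ofReal_div_factorial_mul_pow_ne_top {a : ℝ} (ha : 0 ≤ a) {c : ℕ → ℝ}
    (hsum : Summable fun n => c n / (n ! : ℝ) * a ^ n) :
    ∑' n, ENNReal.ofReal (c n) / n ! * (a.toNNReal : ℝ≥0∞) ^ n ≠ ∞ := by
  convert hsum.tsum_ofReal_ne_top using 3 with n
  rw [ENNReal.ofReal_mul' (pow_nonneg ha n), ENNReal.ofReal_pow ha,
    ENNReal.ofReal_div_of_pos (Nat.cast_pos.2 n.factorial_pos), ENNReal.ofReal_natCast,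
    ENNReal.ofNNReal_toNNReal]

theorem stmt16_general {ι Ω₁ Ω₂ : Type*} [Fintype ι] [MeasurableSpace Ω₁] [MeasurableSpace Ω₂]
    (P₁ : Measure Ω₁) (P₂ : Measure Ω₂) (X : Ω₁ → ι → ℕ) (Y : Ω₂ → ι → ℕ)
    (hX : AEMeasurable X P₁) (hY : AEMeasurable Y P₂)
    (a : ℝ) (ha : 0 < a) (c : ℕ → ℝ)
    (hsum : Summable fun n => c n / (n.factorial : ℝ) * a ^ n)
    (hmom : ∀ n : ι → ℕ,
      (∫⁻ ω, ∏ i, ((X ω i).descFactorial (n i) : ℝ≥0∞) ∂P₁) =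
        (∫⁻ ω, ∏ i, ((Y ω i).descFactorial (n i) : ℝ≥0∞) ∂P₂) ∧
      (∫⁻ ω, ∏ i, ((X ω i).descFactorial (n i) : ℝ≥0∞) ∂P₁) ≤
        ENNReal.ofReal (c (∑ i, n i))) :
    P₁.map (fun ω i => (X ω i : ℝ)) = P₂.map (fun ω i => (Y ω i : ℝ)) := by
  have hlaw : P₁.map X = P₂.map Y := by
    simp_rw [← factorialMoment_map hX, ← factorialMoment_map hY] at hmom
    exact measure_ext_of_factorialMoment_eq (Real.toNNReal_pos.2 ha)
      (tsum_ofReal_div_factorial_mul_pow_ne_top ha.le hsum) (fun n => (hmom n).2)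
      (funext fun n => (hmom n).1)
  have hcast : Measurable fun (x : ι → ℕ) i => (x i : ℝ) := measurable_of_countable _
  calc P₁.map (fun ω i => (X ω i : ℝ))
      = (P₁.map X).map fun x i => (x i : ℝ) :=
        (AEMeasurable.map_map_of_aemeasurable hcast.aemeasurable hX).symm
    _ = (P₂.map Y).map fun x i => (x i : ℝ) := by rw [hlaw]
    _ = P₂.map (fun ω i => (Y ω i : ℝ)) :=
        AEMeasurable.map_map_of_aemeasurable hcast.aemeasurable hY

/-- Lemma A.2 (`MomentProblem`): joint factorial moments which agree and do not grow
too fast determine the law of a `ℤ_{≥0}^m`-valued random vector. -/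
theorem stmt16 (m : ℕ) {Ω₁ Ω₂ : Type*} [MeasurableSpace Ω₁] [MeasurableSpace Ω₂]
    (P₁ : Measure Ω₁) (P₂ : Measure Ω₂)
    [IsProbabilityMeasure P₁] [IsProbabilityMeasure P₂]
    (X : Ω₁ → Fin m → ℕ) (Y : Ω₂ → Fin m → ℕ)
    (hX : Measurable X) (hY : Measurable Y)
    (a : ℝ) (ha : 0 < a) (c : ℕ → ℝ) (hc : ∀ n, 0 ≤ c n)
    (hsum : Summable fun n => c n / (n.factorial : ℝ) * a ^ n)
    (hmom : ∀ n : Fin m → ℕ,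
      (∫⁻ ω, ∏ i, ((X ω i).descFactorial (n i) : ℝ≥0∞) ∂P₁) =
        (∫⁻ ω, ∏ i, ((Y ω i).descFactorial (n i) : ℝ≥0∞) ∂P₂) ∧
      (∫⁻ ω, ∏ i, ((X ω i).descFactorial (n i) : ℝ≥0∞) ∂P₁) ≤
        ENNReal.ofReal (c (∑ i, n i))) :
    Measure.map (fun ω i => (X ω i : ℝ)) P₁ =
      Measure.map (fun ω i => (Y ω i : ℝ)) P₂ :=
  stmt16_general P₁ P₂ X Y hX.aemeasurable hY.aemeasurable a ha c hsum hmom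
end

section
/- Let 𝒞 be a semi-ring of subsets of a set E and fix n ∈ ℕ. Then every product set A₁ × ⋯ × A_n with A₁,…,A_n ∈ 𝒞 can be written as a finite disjoint union of product sets of the form B₁ × ⋯ × B_n with B₁,…,B_n ∈ 𝒞 and with the property that for all 1 ≤ i ≤ j ≤ n, either B_i = B_j or B_i ∩ B_j = ∅. -/
/-- A semi-ring of sets: closed under binary intersections, and differences are
finite disjoint unions of members. -/
def IsSemiRingOfSets {E : Type*} (C : Set (Set E)) : Prop :=
  (∀ A ∈ C, ∀ B ∈ C, A ∩ B ∈ C) ∧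
  (∀ A ∈ C, ∀ B ∈ C, ∃ s : Finset (Set E), (↑s : Set (Set E)) ⊆ C ∧
    (↑s : Set (Set E)).PairwiseDisjoint id ∧ A \ B = ⋃₀ ↑s)

/-
The atoms of the finite algebra generated by `A₁, …, Aₙ` are pairwise disjoint and, apart from the
one outside all `Aᵢ`, belong to the ring generated by the semi-ring, so each is a finite disjoint
union of members. Collecting these members gives one finite disjoint family `Q` such that every
`Aᵢ` is a union of members of `Q`. Distributing the product over these unions decomposes
`A₁ × ⋯ × Aₙ` into boxes whose sides all come from `Q`.
-/

open Function MeasureTheory Set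

section VennAtom

variable {E ι : Type*} {A : ι → Set E} {S : Set ι}

/-- The atom with index set `S` of the algebra of sets generated by the family `A`: the points
lying in `A i` for exactly the `i ∈ S`. It may be empty. -/
def vennAtom (A : ι → Set E) (S : Set ι) : Set E :=
  (fun x ↦ {i | x ∈ A i}) ⁻¹' {S}

theorem mem_vennAtom {x : E} : x ∈ vennAtom A S ↔ ∀ i, x ∈ A i ↔ i ∈ S :=
  Set.ext_iff

theorem mem_vennAtom_setOf_mem (A : ι → Set E) (x : E) : x ∈ vennAtom A {i | x ∈ A i} :=
  rfl

theorem pairwise_disjoint_vennAtom (A : ι → Set E) : Pairwise (Disjoint on vennAtom A) :=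
  pairwise_disjoint_fiber _

theorem vennAtom_subset {i : ι} (hi : i ∈ S) : vennAtom A S ⊆ A i :=
  fun _ hx ↦ (mem_vennAtom.1 hx i).2 hi

theorem vennAtom_eq_biInter_sdiff_biUnion (A : ι → Set E) (S : Set ι) :
    vennAtom A S = (⋂ i ∈ S, A i) \ ⋃ i ∈ Sᶜ, A i := by
  ext x
  simp only [mem_vennAtom, mem_sdiff, mem_iInter, mem_iUnion, mem_compl_iff]
  grind

theorem vennAtom_mem_of_isSetRing [Finite ι] {R : Set (Set E)} (hR : IsSetRing R)
    (hA : ∀ i, A i ∈ R) (hS : S.Nonempty) : vennAtom A S ∈ R := by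
  rw [vennAtom_eq_biInter_sdiff_biUnion]
  refine hR.sdiff_mem ?_ ?_
  · simpa using hR.biInter_mem S.toFinite.toFinset (by simpa using hS) fun i _ ↦ hA i
  · simpa using hR.biUnion_mem Sᶜ.toFinite.toFinset fun i _ ↦ hA i

end VennAtom

theorem exists_disjoint_refinement_of_pairwise_disjoint {E κ : Type*} [Finite κ]
    {C : Set (Set E)} {D : κ → Set E} (hD : Pairwise (Disjoint on D))
    (hDC : ∀ k, ∃ P : Finpartition (D k), ↑P.parts ⊆ C) :
    ∃ Q : Set (Set E), Q.Finite ∧ Q ⊆ C ∧ Q.PairwiseDisjoint id ∧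
      ∀ k, ⋃₀ {q ∈ Q | q ⊆ D k} = D k := by
  choose P hP using hDC
  have sUnion_parts (k : κ) : ⋃₀ ↑(P k).parts = D k :=
    (Finset.sup_id_set_eq_sUnion _).symm.trans (P k).sup_parts
  refine ⟨⋃ k ∈ univ, (P k).parts, ?_, ?_, ?_, fun k ↦ ?_⟩
  · exact finite_univ.biUnion fun k _ ↦ (P k).parts.finite_toSet
  · exact iUnion₂_subset fun k _ ↦ hP k
  · refine PairwiseDisjoint.biUnion (fun k _ l _ hkl ↦ ?_) fun k _ ↦ (P k).disjoint
    simpa only [onFun, id, iSup_eq_iUnion, ← sUnion_eq_biUnion, sUnion_parts] using hD hkl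
  · refine Subset.antisymm (sUnion_subset fun q hq ↦ hq.2) ?_
    refine (sUnion_parts k).superset.trans (sUnion_subset_sUnion fun q hq ↦ ?_)
    exact ⟨mem_biUnion (mem_univ k) hq, (P k).le hq⟩

namespace IsSemiRingOfSets

variable {E : Type*} {C : Set (Set E)}

/- A semi-ring in the present sense need not contain `∅`, since an empty difference is the union of
the empty family; Mathlib's notion requires it. -/
theorem isSetSemiring_insert_empty (hC : IsSemiRingOfSets C) : IsSetSemiring (insert ∅ C) where
  empty_mem := mem_insert _ _
  inter_mem := by
    rintro s (rfl | hs) t (rfl | ht)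
    · simp
    · simp
    · simp
    · exact .inr (hC.1 s hs t ht)
  sdiff_eq_sUnion' := by
    rintro s (rfl | hs) t (rfl | ht)
    · exact ⟨∅, by simp⟩
    · exact ⟨∅, by simp⟩
    · exact ⟨{s}, by simp [hs]⟩
    · obtain ⟨I, hIC, hI⟩ := hC.2 s hs t ht
      exact ⟨I, hIC.trans (subset_insert _ _), hI⟩

theorem exists_finpartition_of_mem_supClosure (hC : IsSemiRingOfSets C) {s : Set E}
    (hs : s ∈ supClosure (insert ∅ C)) : ∃ P : Finpartition s, ↑P.parts ⊆ C := by
  obtain ⟨P, hP⟩ := hC.isSetSemiring_insert_empty.mem_supClosure_iff.1 hs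
  exact ⟨P, fun q hq ↦ (hP hq).resolve_left (P.ne_bot hq)⟩

theorem exists_finpartition_vennAtom (hC : IsSemiRingOfSets C) {ι : Type*} [Finite ι]
    {A : ι → Set E} (hA : ∀ i, A i ∈ C) {S : Set ι} (hS : S.Nonempty) :
    ∃ P : Finpartition (vennAtom A S), ↑P.parts ⊆ C :=
  hC.exists_finpartition_of_mem_supClosure <|
    vennAtom_mem_of_isSetRing hC.isSetSemiring_insert_empty.isSetRing_supClosure
      (fun i ↦ subset_supClosure (mem_insert_of_mem _ (hA i))) hS

theorem exists_disjoint_refinement (hC : IsSemiRingOfSets C) {ι : Type*} [Finite ι]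
    {A : ι → Set E} (hA : ∀ i, A i ∈ C) :
    ∃ Q : Set (Set E), Q.Finite ∧ Q ⊆ C ∧ Q.PairwiseDisjoint id ∧
      ∀ i, ⋃₀ {q ∈ Q | q ⊆ A i} = A i := by
  obtain ⟨Q, hfin, hQC, hQ, hcover⟩ := exists_disjoint_refinement_of_pairwise_disjoint
    ((pairwise_disjoint_vennAtom A).comp_of_injective Subtype.val_injective)
    fun S : {S : Set ι // S.Nonempty} ↦ hC.exists_finpartition_vennAtom hA S.2
  refine ⟨Q, hfin, hQC, hQ, fun i ↦ Subset.antisymm (sUnion_subset fun q hq ↦ hq.2) fun x hx ↦ ?_⟩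
  obtain ⟨q, ⟨hqQ, hq⟩, hxq⟩ :=
    (hcover ⟨{j | x ∈ A j}, i, hx⟩).superset (mem_vennAtom_setOf_mem A x)
  exact ⟨q, ⟨hqQ, hq.trans (vennAtom_subset hx)⟩, hxq⟩

end IsSemiRingOfSets

theorem stmt18_general {E ι : Type*} [Finite ι] {C : Set (Set E)} (hC : IsSemiRingOfSets C)
    {A : ι → Set E} (hA : ∀ i, A i ∈ C) :
    ∃ (p : ℕ) (B : Fin p → ι → Set E),
      (∀ l i, B l i ∈ C) ∧
      (∀ l i l' j, B l i = B l' j ∨ Disjoint (B l i) (B l' j)) ∧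
      Pairwise (Disjoint on fun l ↦ univ.pi (B l)) ∧
      univ.pi A = ⋃ l, univ.pi (B l) := by
  obtain ⟨Q, hfin, hQC, hQ, hA_eq⟩ := hC.exists_disjoint_refinement hA
  let sides (i : ι) : Set (Set E) := {q ∈ Q | q ⊆ A i}
  have sides_finite (i : ι) : (sides i).Finite := hfin.subset (sep_subset _ _)
  have sides_disjoint (i : ι) : (sides i).PairwiseDisjoint id := hQ.subset (sep_subset _ _)
  obtain ⟨p, B, hB_inj, hB_range⟩ := (Finite.pi sides_finite).fin_param
  have hB (l : Fin p) : B l ∈ univ.pi sides := hB_range ▸ mem_range_self l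
  have hBQ (l : Fin p) (i : ι) : B l i ∈ Q := (hB l i trivial).1
  refine ⟨p, B, fun l i ↦ hQC (hBQ l i), fun l i l' j ↦ hQ.eq_or_disjoint (hBQ l i) (hBQ l' j),
    fun l l' hl ↦ pairwiseDisjoint_pi sides_disjoint (hB l) (hB l') (hB_inj.ne hl), ?_⟩
  calc univ.pi A = univ.pi fun i ↦ ⋃ q ∈ sides i, q := by
        simp only [← sUnion_eq_biUnion, sides, hA_eq]
    _ = ⋃ b ∈ univ.pi sides, univ.pi b := (biUnion_univ_pi sides fun _ q ↦ q).symm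
    _ = ⋃ l, univ.pi (B l) := by rw [← hB_range, biUnion_range]

/-- Lemma A.4 (`DSRLemma`, product decomposition): every product of members of a
semi-ring is a finite disjoint union of products of members whose factors are
pairwise equal or disjoint. -/
theorem stmt18 {E : Type*} (C : Set (Set E)) (hC : IsSemiRingOfSets C)
    (n : ℕ) (A : Fin n → Set E) (hA : ∀ i, A i ∈ C) :
    ∃ (p : ℕ) (B : Fin p → Fin n → Set E),
      (∀ l i, B l i ∈ C) ∧
      (∀ l i j, i ≤ j → B l i = B l j ∨ Disjoint (B l i) (B l j)) ∧
      (∀ l l', l ≠ l' → Disjoint {x : Fin n → E | ∀ i, x i ∈ B l i}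
        {x : Fin n → E | ∀ i, x i ∈ B l' i}) ∧
      {x : Fin n → E | ∀ i, x i ∈ A i} = ⋃ l, {x : Fin n → E | ∀ i, x i ∈ B l i} := by
  obtain ⟨p, B, hBC, hB, hdisj, hcover⟩ := by
    simpa only [Set.pi, mem_univ, true_imp_iff] using stmt18_general hC hA
  exact ⟨p, B, hBC, fun l i j _ ↦ hB l i l j, fun _ _ hl ↦ hdisj hl, hcover⟩
end
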